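/- arXiv:1401.2789 — 2 statements merged into one kernel-verified Lean document; each statement's English description precedes it below -/
import Mathlib

section
/- Let k, d, m be positive integers with d > 1, let j_1, …, j_d be integers with 0 ≤ j_i < k, and suppose k + m = Σ_{i=1}^{d} (j_i + m). Then every positive integer root r of the associated polynomial p satisfies r ≥ m; moreover p(m) = 0 if and only if j_i ≥ 1 for every i (i.e. no j_i equals 0). -/
/-!
Write `s⁽ⁿ⁾ = s (s+1) ⋯ (s+n-1)` for the rising factorial. The substitution `x = m - s` turns every
`(x-m)_j` into `(-1)^j s⁽ʲ⁾`, so all the signs of `p` combine into one: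
`p(m-s) = (-1)^k (s⁽ᵏ⁾ - ∑ᵢ s⁽ʲⁱ⁾ (m+jᵢ)⁽ᵏ⁻ʲⁱ⁾)`.
Since `s⁽ᵏ⁾ = s⁽ʲ⁾ (s+j)⁽ᵏ⁻ʲ⁾`, for `0 < s < m` each summand alone exceeds `s⁽ᵏ⁾ > 0`, which leaves
no root strictly between `0` and `m`. At `s = 0` only the summands with `jᵢ = 0` survive, and they
are positive.
-/

noncomputable section

/-- The falling factorial `(x)_j = x (x-1) ⋯ (x-j+1)`, with `(x)_0 = 1`. -/
def fall (x : ℤ) (j : ℕ) : ℤ := ∏ i ∈ Finset.range j, (x - (i : ℤ))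

/-- The polynomial `p(x) = (x-m)_k - ∑_{i=1}^d (-1)^{k-jᵢ} (k+m-1)_{k-jᵢ} (x-m)_{jᵢ}`
associated to the differential equation `f⁽ᵏ⁾ = f⁽ʲ¹⁾ ⋯ f⁽ʲᵈ⁾` and the multiplicity `m`. -/
def assocPoly (k m d : ℕ) (j : Fin d → ℕ) (x : ℤ) : ℤ :=
  fall (x - (m : ℤ)) k -
    ∑ i : Fin d, (-1 : ℤ) ^ (k - j i) * fall ((k : ℤ) + (m : ℤ) - 1) (k - j i)
      * fall (x - (m : ℤ)) (j i)

/-- `q` is the greatest common divisor of the positive integer roots of `p`. -/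
def IsGcdOfPosRoots (p : ℤ → ℤ) (q : ℕ) : Prop :=
  (∀ r : ℕ, 0 < r → p (r : ℤ) = 0 → q ∣ r) ∧
    ∀ t : ℕ, (∀ r : ℕ, 0 < r → p (r : ℤ) = 0 → t ∣ r) → t ∣ q

theorem ascPochhammer_eval_add {R : Type*} [CommSemiring R] (m n : ℕ) (x : R) :
    (ascPochhammer R (m + n)).eval x =
      (ascPochhammer R m).eval x * (ascPochhammer R n).eval (x + m) := by
  simp [← ascPochhammer_mul]

theorem strictMonoOn_ascPochhammer_eval {R : Type*} [Semiring R] [PartialOrder R]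
    [IsStrictOrderedRing R] {n : ℕ} (hn : n ≠ 0) :
    StrictMonoOn (fun x : R ↦ (ascPochhammer R n).eval x) (Set.Ici 0) := by
  induction n, Nat.one_le_iff_ne_zero.mpr hn using Nat.le_induction with
  | base =>
    intro x _ y _ hxy
    simpa only [ascPochhammer_one, Polynomial.eval_X] using hxy
  | succ n hn' ih =>
    have hn₀ : n ≠ 0 := Nat.one_le_iff_ne_zero.mp hn'
    intro x hx y hy hxy
    have eval_nonneg : 0 ≤ (ascPochhammer R n).eval x := by
      simpa [hn₀] using (ih hn₀).monotoneOn Set.self_mem_Ici hx hx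
    simp only [ascPochhammer_succ_eval]
    exact mul_lt_mul'' (ih hn₀ hx hy hxy) (add_lt_add_left hxy _) eval_nonneg
      (add_nonneg hx n.cast_nonneg)

theorem ascPochhammer_eval_lt_mul {R : Type*} [CommSemiring R] [PartialOrder R]
    [IsStrictOrderedRing R] {s t : R} {j k : ℕ} (hs : 0 < s) (hst : s < t) (hjk : j < k) :
    (ascPochhammer R k).eval s <
      (ascPochhammer R j).eval s * (ascPochhammer R (k - j)).eval (t + j) := by
  have hsj : 0 ≤ s + j := add_nonneg hs.le j.cast_nonneg
  have hlt : s + j < t + j := add_lt_add_left hst _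
  calc (ascPochhammer R k).eval s
      = (ascPochhammer R j).eval s * (ascPochhammer R (k - j)).eval (s + j) := by
        rw [← ascPochhammer_eval_add, Nat.add_sub_cancel' hjk.le]
    _ < (ascPochhammer R j).eval s * (ascPochhammer R (k - j)).eval (t + j) :=
        mul_lt_mul_of_pos_left
          (strictMonoOn_ascPochhammer_eval (Nat.sub_ne_zero_of_lt hjk) hsj (hsj.trans hlt.le) hlt)
          (ascPochhammer_pos j s hs)

theorem fall_eq_descPochhammer_eval (x : ℤ) (n : ℕ) : fall x n = (descPochhammer ℤ n).eval x :=
  (descPochhammer_eval_eq_prod_range n x).symm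

theorem fall_neg (x : ℤ) (n : ℕ) : fall (-x) n = (-1) ^ n * (ascPochhammer ℤ n).eval x := by
  rw [fall_eq_descPochhammer_eval, ← neg_neg x, ascPochhammer_eval_neg_eq_descPochhammer, neg_neg,
    ← mul_assoc, ← mul_pow, neg_one_mul, neg_neg, one_pow, one_mul]

theorem fall_add_sub_one (x : ℤ) (n : ℕ) : fall (x + n - 1) n = (ascPochhammer ℤ n).eval x := by
  rw [fall_eq_descPochhammer_eval, descPochhammer_eval_eq_ascPochhammer]
  congr 1
  ring

section AssocPoly

variable {k m d : ℕ} {j : Fin d → ℕ}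

theorem assocPoly_sub (hj : ∀ i, j i ≤ k) (s : ℤ) :
    assocPoly k m d j (m - s) = (-1) ^ k * ((ascPochhammer ℤ k).eval s -
      ∑ i, (ascPochhammer ℤ (j i)).eval s * (ascPochhammer ℤ (k - j i)).eval (m + j i : ℤ)) := by
  have coeff_eq (i : Fin d) :
      fall (k + m - 1) (k - j i) = (ascPochhammer ℤ (k - j i)).eval (m + j i : ℤ) := by
    rw [← fall_add_sub_one, Nat.cast_sub (hj i)]
    congr 1
    ring
  have sign_eq (i : Fin d) : (-1 : ℤ) ^ k = (-1) ^ (k - j i) * (-1) ^ j i := by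
    rw [← pow_add, Nat.sub_add_cancel (hj i)]
  rw [assocPoly, sub_sub_cancel_left, fall_neg, mul_sub, Finset.mul_sum]
  congr 1
  refine Finset.sum_congr rfl fun i _ ↦ ?_
  rw [coeff_eq, fall_neg, sign_eq i]
  ring

theorem assocPoly_ne_zero_of_pos_of_lt (hj : ∀ i, j i < k) {x : ℤ} (hx : 0 < x) (hxm : x < m) :
    assocPoly k m d j x ≠ 0 := by
  obtain ⟨s, rfl⟩ : ∃ s, x = m - s := ⟨m - x, (sub_sub_cancel _ _).symm⟩
  have hs : 0 < s := by linarith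
  have eval_pos : 0 < (ascPochhammer ℤ k).eval s := ascPochhammer_pos k s hs
  have eval_lt (i : Fin d) : (ascPochhammer ℤ k).eval s <
      (ascPochhammer ℤ (j i)).eval s * (ascPochhammer ℤ (k - j i)).eval (m + j i : ℤ) :=
    ascPochhammer_eval_lt_mul hs (by linarith) (hj i)
  rw [assocPoly_sub fun i ↦ (hj i).le]
  refine mul_ne_zero (pow_ne_zero k (by decide)) (sub_ne_zero.mpr ?_)
  rcases isEmpty_or_nonempty (Fin d) with _ | ⟨⟨i⟩⟩
  · simpa using eval_pos.ne'
  · exact ((eval_lt i).trans_le <| Finset.single_le_sum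
      (fun i _ ↦ (eval_pos.trans (eval_lt i)).le) (Finset.mem_univ i)).ne

theorem assocPoly_self_eq_zero_iff (hk : 0 < k) (hm : 0 < m) (hj : ∀ i, j i ≤ k) :
    assocPoly k m d j m = 0 ↔ ∀ i, j i ≠ 0 := by
  have coeff_pos (i : Fin d) : 0 < (ascPochhammer ℤ (k - j i)).eval (m + j i : ℤ) :=
    ascPochhammer_pos _ _ (by positivity)
  have term_nonneg (i : Fin d) : 0 ≤ (ascPochhammer ℤ (j i)).eval 0 *
      (ascPochhammer ℤ (k - j i)).eval (m + j i : ℤ) :=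
    mul_nonneg (by rw [ascPochhammer_eval_zero]; split_ifs <;> decide) (coeff_pos i).le
  have key := assocPoly_sub (m := m) hj 0
  rw [sub_zero, ascPochhammer_ne_zero_eval_zero ℤ hk.ne', zero_sub] at key
  rw [key, mul_eq_zero_iff_left (pow_ne_zero k (by decide)), neg_eq_zero,
    Finset.sum_eq_zero_iff_of_nonneg fun i _ ↦ term_nonneg i]
  simp [(coeff_pos _).ne', ascPochhammer_eval_zero]

end AssocPoly

theorem roots_ge_m_and_root_at_m_iff_general
    (k d m : ℕ) (hk : 0 < k) (hm : 0 < m) (j : Fin d → ℕ) (hj : ∀ i, j i < k) :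
    (∀ r : ℕ, 0 < r → assocPoly k m d j (r : ℤ) = 0 → m ≤ r) ∧
      (assocPoly k m d j (m : ℤ) = 0 ↔ ∀ i, 1 ≤ j i) := by
  constructor
  · intro r hr hroot
    by_contra! hrm
    exact assocPoly_ne_zero_of_pos_of_lt hj (mod_cast hr) (mod_cast hrm) hroot
  · simpa only [Nat.one_le_iff_ne_zero] using assocPoly_self_eq_zero_iff hk hm fun i ↦ (hj i).le

/-- Every positive integer root `r` of the associated polynomial
satisfies `r ≥ m`; and `p(m) = 0` if and only if no `jᵢ` equals `0`. -/
theorem roots_ge_m_and_root_at_m_iff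
    (k d m : ℕ) (hk : 0 < k) (hd : 1 < d) (hm : 0 < m)
    (j : Fin d → ℕ) (hj : ∀ i, j i < k)
    (hsum : k + m = ∑ i : Fin d, (j i + m)) :
    (∀ r : ℕ, 0 < r → assocPoly k m d j (r : ℤ) = 0 → m ≤ r) ∧
      (assocPoly k m d j (m : ℤ) = 0 ↔ ∀ i, 1 ≤ j i) :=
  roots_ge_m_and_root_at_m_iff_general k d m hk hm j hj
end
end

section
/- Let l ≥ 2 and m ≥ 1 be fixed integers and let ε > 0. There exists a constant C > 0 such that for every integer k > l, the number of tuples a ∈ A_{k,l,m} whose associated polynomial p_a has more than one integer root r in the interval m ≤ r < k + m is at most C·k^{l−2+ε}. -/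
noncomputable section

/-- `a ∈ A_{k,l,m}`: an `(l+1)`-tuple of nonnegative integers with
`∑_{j=0}^{l} (j+m) a_j = k + m`. -/
def memA (k l m : ℕ) (a : Fin (l + 1) → ℕ) : Prop :=
  ∑ j : Fin (l + 1), ((j : ℕ) + m) * a j = k + m

/-- The polynomial
`p_a(x) = (x-m)_k - (-1)^k (k+m-1)_{k-l} ∑_{j=0}^{l} (-1)^j a_j (l+m-1)_{l-j} (x-m)_j`
associated to `a ∈ A_{k,l,m}`. -/
def pA (k l m : ℕ) (a : Fin (l + 1) → ℕ) (x : ℤ) : ℤ :=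
  fall (x - (m : ℤ)) k -
    (-1 : ℤ) ^ k * fall ((k : ℤ) + (m : ℤ) - 1) (k - l) *
      ∑ j : Fin (l + 1), (-1 : ℤ) ^ (j : ℕ) * (a j : ℤ) * fall ((l : ℤ) + (m : ℤ) - 1) (l - (j : ℕ))
        * fall (x - (m : ℤ)) (j : ℕ)

/-!
In the range `m ≤ r < k + m` the factor `(r - m)_k` vanishes, so `r` is a root of `p_a` exactly when
it is a root of `q_a(x) = ∑ (-1)^j a_j (l+m-1)_{l-j} (x-m)_j`, whose degree is at most `l`. The
condition `a ∈ A_{k,l,m}` prescribes the value of `q_a` at one further point: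
`m q_a(-1) = m (m+1) ⋯ (m+l-1) (k+m)`. Hence `r + 1` divides `m (m+1) ⋯ (m+l-1) (k+m)`, which leaves
only `O(k^δ)` candidates for `r`. Moreover, `s` roots together with `a_{s+1}, …, a_l` determine `a`:
the difference of two such `q_a` has degree at most `s` and vanishes at the `s` roots and at `-1`.
As each `a_j` is at most `k + m`, there are `O(k^{l-s+ε})` tuples with at least `s` roots.
-/

section DivisorBound

theorem exists_natCast_add_one_le_mul_pow {y : ℝ} (hy : 1 < y) :
    ∃ K : ℝ, 1 ≤ K ∧ ∀ e : ℕ, (e + 1 : ℝ) ≤ K * y ^ e := by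
  have hy' : 0 < y - 1 := sub_pos.mpr hy
  refine ⟨1 + (y - 1)⁻¹, by simpa using hy'.le, fun e ↦ ?_⟩
  have bernoulli : 1 + e * (y - 1) ≤ y ^ e := by
    simpa only [add_sub_cancel] using one_add_mul_le_pow (by linarith : -2 ≤ y - 1) e
  calc (e + 1 : ℝ) ≤ e + 1 + ((y - 1)⁻¹ + e * (y - 1)) := le_add_of_nonneg_right (by positivity)
    _ = (1 + (y - 1)⁻¹) * (1 + e * (y - 1)) := by field_simp; ring
    _ ≤ (1 + (y - 1)⁻¹) * y ^ e := by gcongr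

theorem natCast_add_one_le_pow {y : ℝ} (hy : 2 ≤ y) (e : ℕ) : (e + 1 : ℝ) ≤ y ^ e :=
  calc (e + 1 : ℝ) ≤ 2 ^ e := mod_cast Nat.lt_two_pow_self
    _ ≤ y ^ e := by gcongr

theorem prod_primeFactors_rpow_pow_factorization (δ : ℝ) {n : ℕ} (hn : n ≠ 0) :
    ∏ p ∈ n.primeFactors, ((p : ℝ) ^ δ) ^ n.factorization p = (n : ℝ) ^ δ := by
  have hn_prod : (n : ℝ) = ∏ p ∈ n.primeFactors, (p : ℝ) ^ n.factorization p := by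
    conv_lhs => rw [← Nat.prod_factorization_pow_eq_self hn]
    simp only [Finsupp.prod, Nat.support_factorization, Nat.cast_prod, Nat.cast_pow]
  rw [hn_prod, ← Real.finsetProd_rpow _ _ fun _ _ ↦ by positivity]
  exact Finset.prod_congr rfl fun p _ ↦ (Real.rpow_pow_comm p.cast_nonneg δ _)

/-- The factor `e + 1` of the number of divisors is at most `(p ^ e) ^ δ` unless `p` is less than
the constant `2 ^ (1 / δ)`, so that only boundedly many primes contribute to the constant. -/
theorem exists_card_divisors_le_mul_rpow {δ : ℝ} (hδ : 0 < δ) :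
    ∃ C : ℝ, 0 < C ∧ ∀ n : ℕ, n ≠ 0 → (n.divisors.card : ℝ) ≤ C * (n : ℝ) ^ δ := by
  obtain ⟨B, hB⟩ := exists_nat_ge ((2 : ℝ) ^ δ⁻¹)
  obtain ⟨K, hK, hK_pow⟩ :=
    exists_natCast_add_one_le_mul_pow (Real.one_lt_rpow one_lt_two hδ)
  have local_bound {p : ℕ} (hp : p.Prime) (e : ℕ) :
      (e + 1 : ℝ) ≤ (if p < B then K else 1) * ((p : ℝ) ^ δ) ^ e := by
    have hp_two : (2 : ℝ) ≤ p := mod_cast hp.two_le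
    split_ifs with hpB
    · exact (hK_pow e).trans (by gcongr)
    · have hp_large : (2 : ℝ) ^ δ⁻¹ ≤ p := hB.trans (mod_cast not_lt.mp hpB)
      rw [one_mul]
      exact natCast_add_one_le_pow
        ((Real.rpow_inv_le_iff_of_pos zero_le_two p.cast_nonneg hδ).mp hp_large) e
  have prod_le (n : ℕ) : ∏ p ∈ n.primeFactors, (if p < B then K else 1) ≤ K ^ B := by
    rw [Finset.prod_ite, Finset.prod_const, Finset.prod_const_one, mul_one]
    refine pow_le_pow_right₀ hK ?_
    calc _ ≤ (Finset.range B).card :=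
          Finset.card_le_card fun p hp ↦ Finset.mem_range.mpr (Finset.mem_filter.mp hp).2
      _ = B := Finset.card_range B
  refine ⟨K ^ B, by positivity, fun n hn ↦ ?_⟩
  calc (n.divisors.card : ℝ)
      = ∏ p ∈ n.primeFactors, (n.factorization p + 1 : ℝ) := by
        rw [Nat.card_divisors hn]; push_cast; rfl
    _ ≤ ∏ p ∈ n.primeFactors, (if p < B then K else 1) * ((p : ℝ) ^ δ) ^ n.factorization p :=
        Finset.prod_le_prod (fun _ _ ↦ by positivity)
          fun p hp ↦ local_bound (Nat.prime_of_mem_primeFactors hp) _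
    _ = (∏ p ∈ n.primeFactors, if p < B then K else 1) * (n : ℝ) ^ δ := by
        rw [Finset.prod_mul_distrib, prod_primeFactors_rpow_pow_factorization δ hn]
    _ ≤ K ^ B * (n : ℝ) ^ δ := by gcongr; exact prod_le n

theorem exists_card_divisors_pow_le_mul_rpow (s : ℕ) {ε : ℝ} (hε : 0 < ε) :
    ∃ C : ℝ, 0 < C ∧ ∀ n : ℕ, n ≠ 0 → (n.divisors.card : ℝ) ^ s ≤ C * (n : ℝ) ^ ε := by
  obtain ⟨C, hC, hdiv⟩ :=
    exists_card_divisors_le_mul_rpow (δ := ε / (s + 1)) (by positivity)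
  refine ⟨C ^ s, by positivity, fun n hn ↦ ?_⟩
  have hn_one : (1 : ℝ) ≤ n := mod_cast Nat.one_le_iff_ne_zero.mpr hn
  have exponent_le : ε / (s + 1) * s ≤ ε := by
    rw [div_mul_eq_mul_div, div_le_iff₀ (by positivity)]
    linarith
  calc (n.divisors.card : ℝ) ^ s ≤ (C * (n : ℝ) ^ (ε / (s + 1))) ^ s := by gcongr; exact hdiv n hn
    _ = C ^ s * (n : ℝ) ^ (ε / (s + 1) * s) := by
        rw [mul_pow, Real.rpow_mul_natCast n.cast_nonneg]
    _ ≤ C ^ s * (n : ℝ) ^ ε := by gcongr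

end DivisorBound

section FallingFactorial

theorem fall_eq_eval_descPochhammer (x : ℤ) (j : ℕ) : fall x j = (descPochhammer ℤ j).eval x :=
  (descPochhammer_eval_eq_prod_range j x).symm

theorem fall_succ (x : ℤ) (j : ℕ) : fall x (j + 1) = fall x j * (x - j) :=
  Finset.prod_range_succ _ _

theorem fall_add (x : ℤ) (i j : ℕ) : fall x (i + j) = fall x i * fall (x - i) j := by
  simp only [fall, Finset.prod_range_add, Nat.cast_add, sub_sub]

theorem fall_pos {x : ℤ} {j : ℕ} (h : (j : ℤ) ≤ x) : 0 < fall x j := by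
  rw [fall_eq_eval_descPochhammer]
  exact descPochhammer_pos (by omega)

theorem fall_eq_zero {x : ℤ} {j : ℕ} (hx : 0 ≤ x) (hxj : x < j) : fall x j = 0 :=
  Finset.prod_eq_zero (i := x.toNat) (Finset.mem_range.mpr (by omega)) (by omega)

theorem neg_one_pow_mul_fall_neg (x : ℤ) (j : ℕ) : (-1) ^ j * fall (-x) j = fall (x + j - 1) j := by
  simp only [fall_eq_eval_descPochhammer]
  rw [← ascPochhammer_eval_neg_eq_descPochhammer, descPochhammer_eval_eq_ascPochhammer]
  congr 1
  ring

theorem fall_add_sub_one_eq_ascFactorial (l : ℕ) {m : ℕ} (hm : 1 ≤ m) :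
    fall ((l : ℤ) + m - 1) l = m.ascFactorial l := by
  obtain ⟨n, rfl⟩ := Nat.exists_eq_add_of_le' hm
  rw [fall_eq_eval_descPochhammer, ← descPochhammer_int_eq_ascFactorial]
  congr 1
  push_cast
  ring

end FallingFactorial

section InnerPolynomial

open Polynomial

/-- The polynomial `(-1)^j (l+m-1)_{l-j} (X-m)_j`, which `p_a` contains with coefficient `a_j`. -/
def scaledFall (l m j : ℕ) : ℤ[X] :=
  C ((-1) ^ j * fall ((l : ℤ) + m - 1) (l - j)) * (descPochhammer ℤ j).comp (X - C (m : ℤ))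

/-- The polynomial `q_c(X) = ∑ (-1)^j c_j (l+m-1)_{l-j} (X-m)_j`, so that `q_a` is the inner sum of
`p_a`. It is a linear map in `c`, with integer coefficients allowed, in order that the difference of
two tuples has a polynomial too. -/
def innerPoly (l m : ℕ) : (Fin (l + 1) → ℤ) →ₗ[ℤ] ℤ[X] :=
  Fintype.linearCombination ℤ fun j : Fin (l + 1) ↦ scaledFall l m j

theorem innerPoly_apply (l m : ℕ) (c : Fin (l + 1) → ℤ) :
    innerPoly l m c = ∑ j, c j • scaledFall l m j :=
  Fintype.linearCombination_apply ..

theorem eval_scaledFall (l m j : ℕ) (x : ℤ) :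
    (scaledFall l m j).eval x =
      (-1) ^ j * fall ((l : ℤ) + m - 1) (l - j) * fall (x - m) j := by
  simp only [scaledFall, fall_eq_eval_descPochhammer, eval_mul, eval_C, eval_comp, eval_sub, eval_X]

theorem eval_innerPoly (l m : ℕ) (c : Fin (l + 1) → ℤ) (x : ℤ) :
    (innerPoly l m c).eval x = ∑ j, c j * (scaledFall l m j).eval x := by
  simp only [innerPoly_apply, eval_finsetSum, eval_smul, smul_eq_mul]

theorem degree_scaledFall (l : ℕ) {m : ℕ} (hm : 1 ≤ m) (j : ℕ) : (scaledFall l m j).degree = j := by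
  have hfall : fall ((l : ℤ) + m - 1) (l - j) ≠ 0 := (fall_pos (by omega)).ne'
  rw [scaledFall, degree_C_mul (mul_ne_zero (by simp) hfall), degree_eq_natDegree, natDegree_comp,
    descPochhammer_natDegree, natDegree_X_sub_C, mul_one]
  exact ((monic_descPochhammer ℤ j).comp_X_sub_C _).ne_zero

theorem innerPoly_injective (l : ℕ) {m : ℕ} (hm : 1 ≤ m) : Function.Injective (innerPoly l m) := by
  let S : Polynomial.Sequence ℤ := ⟨scaledFall l m, degree_scaledFall l hm⟩
  exact (S.linearIndependent.comp (Fin.val : Fin (l + 1) → ℕ)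
    Fin.val_injective).fintypeLinearCombination_injective

theorem natDegree_innerPoly_le {l m s : ℕ} (hm : 1 ≤ m) {c : Fin (l + 1) → ℤ}
    (hc : ∀ j : Fin (l + 1), s < j → c j = 0) : (innerPoly l m c).natDegree ≤ s := by
  rw [innerPoly_apply]
  refine natDegree_sum_le_of_forall_le _ _ fun j _ ↦ ?_
  by_cases hj : s < j
  · simp [hc j hj]
  · exact (natDegree_smul_le _ _).trans
      ((natDegree_eq_of_degree_eq_some (degree_scaledFall l hm j)).trans_le (not_lt.mp hj))

theorem eq_zero_of_eval_innerPoly_eq_zero {l m s : ℕ} (hm : 1 ≤ m) {c : Fin (l + 1) → ℤ}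
    (hc : ∀ j : Fin (l + 1), s < j → c j = 0) {Z : Finset ℤ} (hZ : s < Z.card)
    (hzero : ∀ x ∈ Z, (innerPoly l m c).eval x = 0) : c = 0 :=
  innerPoly_injective l hm <| (map_zero (innerPoly l m)).symm ▸
    eq_zero_of_natDegree_lt_card_of_eval_eq_zero' _ Z hzero
      ((natDegree_innerPoly_le hm hc).trans_lt hZ)

theorem mul_eval_scaledFall_neg_one {l m j : ℕ} (hm : 1 ≤ m) (hj : j ≤ l) :
    m * (scaledFall l m j).eval (-1) = m.ascFactorial l * (j + m) := by
  have fall_split : fall ((l : ℤ) + m - 1) l =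
      fall ((l : ℤ) + m - 1) (l - j) * fall ((m : ℤ) + j - 1) j := by
    conv_lhs => rw [← Nat.sub_add_cancel hj, fall_add]
    grind
  have fall_shift : fall ((m : ℤ) + j) j * m = (m + j) * fall ((m : ℤ) + j - 1) j :=
    calc fall ((m : ℤ) + j) j * m = fall ((m : ℤ) + j) (1 + j) := by
          rw [add_comm 1 j, fall_succ, add_sub_cancel_right]
      _ = (m + j) * fall ((m : ℤ) + j - 1) j := by
          rw [fall_add]; simp [fall]
  have fall_neg : (-1) ^ j * fall (-1 - m) j = fall ((m : ℤ) + j) j := by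
    rw [← neg_add', neg_one_pow_mul_fall_neg]
    congr 1
    ring
  rw [eval_scaledFall, ← fall_add_sub_one_eq_ascFactorial l hm, fall_split]
  linear_combination fall ((l : ℤ) + m - 1) (l - j) * (m * fall_neg + fall_shift)

theorem mul_eval_innerPoly_neg_one (l : ℕ) {m : ℕ} (hm : 1 ≤ m) (c : Fin (l + 1) → ℤ) :
    m * (innerPoly l m c).eval (-1) =
      m.ascFactorial l * ∑ j : Fin (l + 1), ((j : ℤ) + m) * c j := by
  rw [eval_innerPoly, Finset.mul_sum, Finset.mul_sum]
  refine Finset.sum_congr rfl fun j _ ↦ ?_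
  linear_combination c j * mul_eval_scaledFall_neg_one hm (Nat.lt_succ_iff.mp j.isLt)

/-- The number `m (m+1) ⋯ (m+l-1) (k+m)`, which is `m q_a(-1)` for `a ∈ A_{k,l,m}` and hence is
divisible by `r + 1` for each root `r` of `q_a`. -/
def rootModulus (k l m : ℕ) : ℕ := m.ascFactorial l * (k + m)

theorem rootModulus_pos (k l : ℕ) {m : ℕ} (hm : 1 ≤ m) : 0 < rootModulus k l m := by
  obtain ⟨n, rfl⟩ := Nat.exists_eq_add_of_le' hm
  exact Nat.mul_pos (Nat.ascFactorial_pos n l) (by omega)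

theorem rootModulus_le_mul {k : ℕ} (hk : 1 ≤ k) (l m : ℕ) :
    rootModulus k l m ≤ rootModulus 1 l m * k := by
  rw [rootModulus, rootModulus, mul_assoc]
  gcongr
  nlinarith

theorem mul_eval_innerPoly_neg_one_of_memA {k l m : ℕ} (hm : 1 ≤ m) {a : Fin (l + 1) → ℕ}
    (ha : memA k l m a) :
    m * (innerPoly l m fun j ↦ (a j : ℤ)).eval (-1) = rootModulus k l m := by
  rw [rootModulus, mul_eval_innerPoly_neg_one l hm, ← ha]
  push_cast
  rfl

end InnerPolynomial

section SmallRoots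

variable {k l m : ℕ}

/-- The integer roots `r` of `p_a` with `m ≤ r < k + m`. -/
def smallRoots (k l m : ℕ) (a : Fin (l + 1) → ℕ) : Finset ℤ :=
  {r ∈ Finset.Ico (m : ℤ) (k + m) | pA k l m a r = 0}

/-- The integers `d - 1` with `d` a positive divisor of `rootModulus k l m`: they contain all small
roots of all `p_a` with `a ∈ A_{k,l,m}`. -/
def candidateRoots (k l m : ℕ) : Finset ℤ :=
  (rootModulus k l m).divisors.image fun d : ℕ ↦ (d : ℤ) - 1

theorem mem_smallRoots {a : Fin (l + 1) → ℕ} {r : ℤ} :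
    r ∈ smallRoots k l m a ↔ ((m : ℤ) ≤ r ∧ r < k + m) ∧ pA k l m a r = 0 := by
  rw [smallRoots, Finset.mem_filter, Finset.mem_Ico]

theorem two_le_card_smallRoots_iff {a : Fin (l + 1) → ℕ} :
    2 ≤ (smallRoots k l m a).card ↔ ∃ r₁ r₂ : ℤ, r₁ ≠ r₂ ∧
      (m : ℤ) ≤ r₁ ∧ r₁ < (k : ℤ) + m ∧ (m : ℤ) ≤ r₂ ∧ r₂ < (k : ℤ) + m ∧
      pA k l m a r₁ = 0 ∧ pA k l m a r₂ = 0 := by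
  simp only [Nat.succ_le_iff, Finset.one_lt_card_iff, mem_smallRoots]
  exact exists₂_congr fun r₁ r₂ ↦ by tauto

theorem pA_eq_fall_sub_eval_innerPoly (k l m : ℕ) (a : Fin (l + 1) → ℕ) (x : ℤ) :
    pA k l m a x = fall (x - m) k - (-1) ^ k * fall ((k : ℤ) + m - 1) (k - l) *
      (innerPoly l m fun j ↦ (a j : ℤ)).eval x := by
  simp only [pA, eval_innerPoly, eval_scaledFall]
  congr! 3
  ring

theorem eval_innerPoly_eq_zero_of_mem_smallRoots (hm : 1 ≤ m) {a : Fin (l + 1) → ℕ} {r : ℤ}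
    (hr : r ∈ smallRoots k l m a) : (innerPoly l m fun j ↦ (a j : ℤ)).eval r = 0 := by
  obtain ⟨⟨hmr, hrk⟩, hroot⟩ := mem_smallRoots.mp hr
  rw [pA_eq_fall_sub_eval_innerPoly, fall_eq_zero (by omega) (by omega), zero_sub,
    neg_eq_zero] at hroot
  have hfall : fall ((k : ℤ) + m - 1) (k - l) ≠ 0 := (fall_pos (by omega)).ne'
  exact (mul_eq_zero.mp hroot).resolve_left (mul_ne_zero (by simp) hfall)

theorem add_one_dvd_of_mem_smallRoots (hm : 1 ≤ m) {a : Fin (l + 1) → ℕ} (ha : memA k l m a)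
    {r : ℤ} (hr : r ∈ smallRoots k l m a) : r + 1 ∣ rootModulus k l m := by
  have hdvd := (innerPoly l m fun j ↦ (a j : ℤ)).sub_dvd_eval_sub r (-1)
  rw [eval_innerPoly_eq_zero_of_mem_smallRoots hm hr, zero_sub, dvd_neg, sub_neg_eq_add] at hdvd
  exact mul_eval_innerPoly_neg_one_of_memA hm ha ▸ hdvd.mul_left _

theorem smallRoots_subset_candidateRoots (hm : 1 ≤ m) {a : Fin (l + 1) → ℕ}
    (ha : memA k l m a) : smallRoots k l m a ⊆ candidateRoots k l m := by
  intro r hr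
  have hmr := (mem_smallRoots.mp hr).1.1
  refine Finset.mem_image.mpr
    ⟨(r + 1).toNat, Nat.mem_divisors.mpr ⟨?_, (rootModulus_pos k l hm).ne'⟩, by omega⟩
  rw [← Int.natCast_dvd_natCast, Int.toNat_of_nonneg (by omega)]
  exact add_one_dvd_of_mem_smallRoots hm ha hr

theorem le_add_of_memA (hm : 1 ≤ m) {a : Fin (l + 1) → ℕ} (ha : memA k l m a)
    (j : Fin (l + 1)) : a j ≤ k + m :=
  calc a j ≤ (j + m) * a j := Nat.le_mul_of_pos_left _ (by omega)
    _ ≤ ∑ i : Fin (l + 1), ((i : ℕ) + m) * a i :=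
        Finset.single_le_sum (f := fun i : Fin (l + 1) ↦ ((i : ℕ) + m) * a i)
          (fun _ _ ↦ Nat.zero_le _) (Finset.mem_univ j)
    _ = k + m := ha

theorem card_smallRoots_le (hm : 1 ≤ m) {a : Fin (l + 1) → ℕ} (ha : memA k l m a) :
    (smallRoots k l m a).card ≤ l := by
  by_contra! hcard
  have a_eq_zero := eq_zero_of_eval_innerPoly_eq_zero hm (fun j hj ↦ absurd hj (by omega)) hcard
    fun r hr ↦ eval_innerPoly_eq_zero_of_mem_smallRoots hm hr
  have hsum := mul_eval_innerPoly_neg_one_of_memA hm ha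
  rw [a_eq_zero, map_zero, Polynomial.eval_zero, mul_zero] at hsum
  exact (rootModulus_pos k l hm).ne (mod_cast hsum)

theorem eq_of_subset_smallRoots (hm : 1 ≤ m) {a b : Fin (l + 1) → ℕ} (ha : memA k l m a)
    (hb : memA k l m b) {R : Finset ℤ} (hRa : R ⊆ smallRoots k l m a)
    (hRb : R ⊆ smallRoots k l m b) (hab : ∀ j : Fin (l + 1), R.card < j → a j = b j) : a = b := by
  have neg_one_notMem : -1 ∉ R := fun h ↦ by
    have := (mem_smallRoots.mp (hRa h)).1.1
    omega
  have eval_neg_one_eq : (innerPoly l m fun j ↦ (a j : ℤ)).eval (-1) =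
      (innerPoly l m fun j ↦ (b j : ℤ)).eval (-1) := by
    apply mul_left_cancel₀ (Nat.cast_ne_zero.mpr (by omega) : (m : ℤ) ≠ 0)
    rw [mul_eval_innerPoly_neg_one_of_memA hm ha, mul_eval_innerPoly_neg_one_of_memA hm hb]
  have sub_eq_zero_fun : (fun j ↦ (a j : ℤ)) - (fun j ↦ (b j : ℤ)) = 0 := by
    refine eq_zero_of_eval_innerPoly_eq_zero (s := R.card) (Z := insert (-1) R) hm
      (fun j hj ↦ by simp [hab j hj]) (by simp [neg_one_notMem]) fun x hx ↦ ?_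
    rw [map_sub, Polynomial.eval_sub, sub_eq_zero]
    obtain rfl | hx := Finset.mem_insert.mp hx
    · exact eval_neg_one_eq
    · rw [eval_innerPoly_eq_zero_of_mem_smallRoots hm (hRa hx),
        eval_innerPoly_eq_zero_of_mem_smallRoots hm (hRb hx)]
  funext j
  simpa [sub_eq_zero] using congrFun sub_eq_zero_fun j

theorem card_fin_subtype_lt (l s : ℕ) : Nat.card {j : Fin (l + 1) // s < j} = l - s := by
  have lt_iff (j : Fin (l + 1)) : s < (j : ℕ) ↔ ¬(j : ℕ) < s + 1 := by omega
  rw [Nat.card_congr (Equiv.subtypeEquivRight lt_iff), Nat.card_eq_fintype_card,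
    Fintype.card_subtype_compl, Fintype.card_subtype, Fin.card_filter_val_lt, Fintype.card_fin]
  omega

theorem card_memA_smallRoots_le (hm : 1 ≤ m) (k l s : ℕ) :
    Nat.card {a : Fin (l + 1) → ℕ // memA k l m a ∧ s ≤ (smallRoots k l m a).card} ≤
      (rootModulus k l m).divisors.card ^ s * (k + m + 1) ^ (l - s) := by
  choose R hR hR_card using fun a : {a : Fin (l + 1) → ℕ //
    memA k l m a ∧ s ≤ (smallRoots k l m a).card} ↦ Finset.exists_subset_card_eq a.2.2
  have R_mem (a) : R a ∈ (candidateRoots k l m).powersetCard s := Finset.mem_powersetCard.mpr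
    ⟨(hR a).trans (smallRoots_subset_candidateRoots hm a.2.1), hR_card a⟩
  let encode (a) : (candidateRoots k l m).powersetCard s ×
      ({j : Fin (l + 1) // s < j} → Fin (k + m + 1)) :=
    (⟨R a, R_mem a⟩, fun j ↦ ⟨a.1 j, Nat.lt_succ_of_le (le_add_of_memA hm a.2.1 j)⟩)
  have encode_injective : Function.Injective encode := by
    intro a b hab
    obtain ⟨hRab, htail⟩ := Prod.mk.inj hab
    have hRab : R a = R b := congrArg Subtype.val hRab
    refine Subtype.ext (eq_of_subset_smallRoots hm a.2.1 b.2.1 (hR a) (hRab ▸ hR b) fun j hj ↦ ?_)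
    exact congrArg Fin.val (congrFun htail ⟨j, hR_card a ▸ hj⟩)
  calc _ ≤ Nat.card ((candidateRoots k l m).powersetCard s ×
        ({j : Fin (l + 1) // s < j} → Fin (k + m + 1))) :=
        Nat.card_le_card_of_injective encode encode_injective
    _ = (candidateRoots k l m).card.choose s * (k + m + 1) ^ (l - s) := by
        rw [Nat.card_prod, Nat.card_fun, Nat.card_eq_finsetCard, Finset.card_powersetCard,
          Nat.card_fin, card_fin_subtype_lt]
    _ ≤ (candidateRoots k l m).card ^ s * (k + m + 1) ^ (l - s) := by
        gcongr
        exact Nat.choose_le_pow _ _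
    _ ≤ _ := by
        gcongr
        exact Finset.card_image_le

end SmallRoots

theorem count_two_small_roots_general (l s : ℕ) {m : ℕ} (hm : 1 ≤ m) {ε : ℝ} (hε : 0 < ε) :
    ∃ C : ℝ, 0 < C ∧ ∀ k : ℕ, l < k →
      (Nat.card {a : Fin (l + 1) → ℕ // memA k l m a ∧ s ≤ (smallRoots k l m a).card} : ℝ) ≤
        C * (k : ℝ) ^ ((l : ℝ) - s + ε) := by
  obtain hls | hsl := lt_or_ge l s
  · refine ⟨1, one_pos, fun k _ ↦ ?_⟩
    have : IsEmpty {a : Fin (l + 1) → ℕ // memA k l m a ∧ s ≤ (smallRoots k l m a).card} :=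
      ⟨fun a ↦ (hls.trans_le a.2.2).not_ge (card_smallRoots_le hm a.2.1)⟩
    rw [Nat.card_of_isEmpty, Nat.cast_zero]
    positivity
  obtain ⟨C, hC, hdiv⟩ := exists_card_divisors_pow_le_mul_rpow s hε
  have modulus_pos := rootModulus_pos 1 l hm
  refine ⟨C * (rootModulus 1 l m : ℝ) ^ ε * (m + 2) ^ (l - s), by positivity, fun k hlk ↦ ?_⟩
  have hk : 1 ≤ k := by omega
  have tail_le : k + m + 1 ≤ (m + 2) * k := by nlinarith
  calc _ ≤ ((rootModulus k l m).divisors.card : ℝ) ^ s * (k + m + 1 : ℕ) ^ (l - s) :=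
        mod_cast card_memA_smallRoots_le hm k l s
    _ ≤ C * (rootModulus k l m : ℝ) ^ ε * (k + m + 1 : ℕ) ^ (l - s) := by
        gcongr
        exact hdiv _ (rootModulus_pos k l hm).ne'
    _ ≤ C * (rootModulus 1 l m * k : ℕ) ^ ε * ((m + 2) * k : ℕ) ^ (l - s) := by
        gcongr
        exact rootModulus_le_mul hk l m
    _ = C * (rootModulus 1 l m : ℝ) ^ ε * (m + 2) ^ (l - s) * (k : ℝ) ^ ((l : ℝ) - s + ε) := by
        push_cast
        rw [Real.mul_rpow (by positivity) (by positivity), mul_pow, Real.rpow_add (by positivity),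
          ← Nat.cast_sub hsl, Real.rpow_natCast]
        ring

/-- For fixed `l ≥ 2`, `m ≥ 1` and `ε > 0`, the number of `a ∈ A_{k,l,m}`
whose polynomial `p_a` has more than one integer root in `[m, k+m)` is
`O_{l,m,ε}(k^{l-2+ε})`. -/
theorem count_two_small_roots
    (l m : ℕ) (hl : 2 ≤ l) (hm : 1 ≤ m) (ε : ℝ) (hε : 0 < ε) :
    ∃ C : ℝ, 0 < C ∧ ∀ k : ℕ, l < k →
      (Nat.card {a : Fin (l + 1) → ℕ // memA k l m a ∧
          ∃ r₁ r₂ : ℤ, r₁ ≠ r₂ ∧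
            (m : ℤ) ≤ r₁ ∧ r₁ < (k : ℤ) + m ∧ (m : ℤ) ≤ r₂ ∧ r₂ < (k : ℤ) + m ∧
            pA k l m a r₁ = 0 ∧ pA k l m a r₂ = 0} : ℝ) ≤
        C * (k : ℝ) ^ ((l : ℝ) - 2 + ε) := by
  simpa only [two_le_card_smallRoots_iff, Nat.cast_ofNat] using
    count_two_small_roots_general l 2 hm hε
end
end
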